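/- Suppose I_k is a minimum-weight common independent set of size k of matroids M₁ and M₂, and some common independent set of size k+1 exists. Then min_{k+1}(M₁,M₂) = W(I_k) + L, where L is the minimum weight of a directed path from X₁ to X₂ in the exchange graph 𝓔(M₁,M₂,I_k). -/

import Mathlib

/-- `I` is a common independent set of the matroids `M₁` and `M₂`. -/
def CommonIndep {α : Type*} (M₁ M₂ : Matroid α) (I : Finset α) : Prop :=
  M₁.Indep ↑I ∧ M₂.Indep ↑I

/-- The weight `W(I) = ∑_{s ∈ I} W(s)` of a set. -/
def setW {α : Type*} (W : α → ℤ) (I : Finset α) : ℤ := ∑ x ∈ I, W x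

/-- Adjacency in the exchange graph `𝓔(M₁,M₂,I)`: for `y ∈ I` and `x ∉ I` there is an
edge `(y,x)` iff `(I \ {y}) ∪ {x} ∈ 𝓘₁`, and an edge `(x,y)` iff `(I \ {y}) ∪ {x} ∈ 𝓘₂`. -/
def ExchAdj {α : Type*} [DecidableEq α] (M₁ M₂ : Matroid α) (I : Finset α) (u v : α) : Prop :=
  (u ∈ I ∧ v ∉ I ∧ M₁.Indep ↑(insert v (I.erase u))) ∨
  (u ∉ I ∧ v ∈ I ∧ M₂.Indep ↑(insert u (I.erase v)))

/-- The vertex weights of the exchange graph: `l(s) = -W(s)` if `s ∈ I`, else `l(s) = W(s)`. -/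
def exchWt {α : Type*} [DecidableEq α] (W : α → ℤ) (I : Finset α) (s : α) : ℤ :=
  if s ∈ I then -W s else W s

/-- The weight of a walk/path/cycle given by the vertex list `l`: the sum of the vertex
weights over `l`. -/
def listW {α : Type*} [DecidableEq α] (W : α → ℤ) (I : Finset α) (l : List α) : ℤ :=
  (l.map (exchWt W I)).sum

/-- `l` is (the vertex list of) a simple directed cycle for the adjacency relation `Adj`. -/
def IsCycle {α : Type*} (Adj : α → α → Prop) (l : List α) : Prop :=
  ∃ h : l ≠ [], l.Chain' Adj ∧ Adj (l.getLast h) (l.head h) ∧ l.Nodup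

/-- `x ∈ X₁`, i.e. `x ∉ I` and `I ∪ {x} ∈ 𝓘₁` (and analogously for `X₂` with `M₂`). -/
def memX {α : Type*} [DecidableEq α] (M : Matroid α) (I : Finset α) (x : α) : Prop :=
  x ∉ I ∧ M.Indep ↑(insert x I)

/-- `l` is (the vertex list of) a simple directed path from `X₁` to `X₂` in the exchange
graph `𝓔(M₁,M₂,I)`. -/
def IsXPath {α : Type*} [DecidableEq α] (M₁ M₂ : Matroid α) (I : Finset α) (l : List α) : Prop :=
  ∃ h : l ≠ [], l.Chain' (ExchAdj M₁ M₂ I) ∧ l.Nodup ∧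
    memX M₁ I (l.head h) ∧ memX M₂ I (l.getLast h)

/-- `I` is a minimum-weight common independent set of size `k` (not necessarily unique). -/
def IsMinWtOfSize {α : Type*} (M₁ M₂ : Matroid α) (W : α → ℤ) (k : ℕ) (I : Finset α) : Prop :=
  CommonIndep M₁ M₂ I ∧ I.card = k ∧
    ∀ J : Finset α, CommonIndep M₁ M₂ J → J.card = k → setW W I ≤ setW W J

/-- `W` isolates the size-`k` common independent set `I`: `I` is the unique minimum-weight
common independent set of size `k`. -/
def Isolates {α : Type*} (M₁ M₂ : Matroid α) (W : α → ℤ) (k : ℕ) (I : Finset α) : Prop :=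
  CommonIndep M₁ M₂ I ∧ I.card = k ∧
    ∀ J : Finset α, CommonIndep M₁ M₂ J → J.card = k → J ≠ I → setW W I < setW W J

/-!
Frank's weight splitting. Write `W = w₁ + w₂` so that `I` is locally `wᵢ`-optimal in `Mᵢ`, and let
`mᵢ` be a lower bound for the `wᵢ`-weight of an element extending `I` in `Mᵢ`. Local optimality is
global in a single matroid, so `W(I) + m₁ + m₂` bounds the common independent sets of size `|I| + 1`
from below; since `wᵢ` is monotone along the arcs of `Mᵢ`, the sum `m₁ + m₂` also bounds the paths
from `X₁` to `X₂`.

Choose a splitting with `m₁ + m₂` maximal. If no walk of tight arcs joins tight extensions of `M₁`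
to tight extensions of `M₂`, then moving one unit of weight from `w₁` to `w₂` off the vertices
reachable by tight arcs increases `m₂`. Hence there is such a walk; it has weight `m₁ + m₂`, and
augmenting along a shortest one yields a common independent set, so both bounds are attained.

A splitting exists at every minimum-weight `I` by induction on its size: an optimal splitting at a
minimum-weight set of size `k` still splits the weight at every one of size `k + 1`.
-/

open scoped symmDiff

section Exchange

variable {α : Type*} {M : Matroid α}

-- Insert the elements of `X` by increasing `r`: those ranked below `x` cannot extend `A`, so they
-- lie in the closure of `A`, and `x` does not.
theorem indep_union_of_forall_insert_indep {β : Type*} [LinearOrder β] {B : Set α}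
    (hB : M.Indep B) (X : Finset α) (r : α → β)
    (h : ∀ x ∈ X, ∃ A, B ⊆ A ∧ x ∉ A ∧ M.Indep (insert x A) ∧
      ∀ x' ∈ X, x' ≠ x → M.Indep (insert x' A) → r x < r x') :
    M.Indep (B ∪ X) := by
  classical
  induction X using Finset.induction_on_max_value r with
  | empty => simpa using hB
  | insert a s has hmax ih =>
    obtain ⟨A, hBA, haA, hinsA, hlater⟩ := h a (Finset.mem_insert_self a s)
    have hA : M.Indep A := hinsA.subset (Set.subset_insert a A)
    have hs : M.Indep (B ∪ s) := ih fun x hx ↦ by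
      obtain ⟨A', hBA', hxA', hinsA', hlater'⟩ := h x (Finset.mem_insert_of_mem hx)
      exact ⟨A', hBA', hxA', hinsA', fun x' hx' ↦ hlater' x' (Finset.mem_insert_of_mem hx')⟩
    have hs_closure : B ∪ s ⊆ M.closure A := by
      refine Set.union_subset (hBA.trans (M.subset_closure A)) fun x hx ↦ ?_
      have hxE : x ∈ M.E := hs.subset_ground (Or.inr hx)
      by_contra hxA
      have hxa : x ≠ a := fun hxa ↦ has (hxa ▸ hx)
      have hlt := hlater x (Finset.mem_insert_of_mem hx) hxa ((hA.notMem_closure_iff hxE).1 hxA).1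
      exact hlt.not_ge (hmax x hx)
    obtain ⟨haE, ha⟩ := (hA.insert_indep_iff_of_notMem haA).1 hinsA
    rw [Finset.coe_insert, Set.union_insert, hs.insert_indep_iff]
    exact Or.inl ⟨haE, fun hmem ↦ ha (M.closure_subset_closure_of_subset_closure hs_closure hmem)⟩

theorem exists_insert_sdiff_singleton_indep {I K : Set α} {x : α} (hI : M.Indep I) (hxI : x ∉ I)
    (hx : x ∈ M.closure I) (hxK : x ∉ M.closure K) :
    ∃ y ∈ I, y ∉ M.closure K ∧ M.Indep (insert x (I \ {y})) := by
  have hC := hI.fundCircuit_isCircuit hx hxI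
  obtain ⟨y, ⟨hyC, hyx⟩, hyK⟩ : ∃ y ∈ M.fundCircuit x I \ {x}, y ∉ M.closure K := by
    by_contra! hCK
    exact hxK (M.closure_subset_closure_of_subset_closure hCK
      (hC.mem_closure_sdiff_singleton_of_mem (M.mem_fundCircuit x I)))
  have hyI : y ∈ I := (M.fundCircuit_subset_insert x I hyC).resolve_left hyx
  refine ⟨y, hyI, hyK, ?_⟩
  rw [Set.insert_sdiff_singleton_comm (Ne.symm hyx)]
  exact (hI.mem_fundCircuit_iff hx hxI).1 hyC

variable [DecidableEq α]

/-- `(y, x)` is an exchange pair of `M` at `I`: an arc of the exchange graph of the single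
matroid `M`, always oriented from the element leaving `I` to the element entering it. -/
def IsExchange (M : Matroid α) (I : Finset α) (y x : α) : Prop :=
  y ∈ I ∧ x ∉ I ∧ M.Indep ↑(insert x (I.erase y))

theorem exchAdj_iff {M₁ M₂ : Matroid α} {I : Finset α} {u v : α} :
    ExchAdj M₁ M₂ I u v ↔ IsExchange M₁ I u v ∨ IsExchange M₂ I v u := by
  unfold ExchAdj IsExchange
  tauto

variable {I J : Finset α} {x y : α} {w : α → ℤ} {m : ℤ}

theorem exists_isExchange_isExchange (hI : M.Indep ↑I) (hJ : M.Indep ↑J) (hcard : J.card = I.card)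
    (hxJ : x ∈ J) (hxI : x ∉ I) : ∃ y, IsExchange M I y x ∧ IsExchange M J x y := by
  have hJx : M.Indep ↑(J.erase x) := hJ.subset (Finset.coe_subset.2 (J.erase_subset x))
  have hxE : x ∈ M.E := hJ.subset_ground hxJ
  by_cases hx : x ∈ M.closure ↑I
  · have hxJx : x ∉ M.closure ↑(J.erase x) := by
      rwa [hJx.notMem_closure_iff_of_notMem (by simp), ← Finset.coe_insert,
        Finset.insert_erase hxJ]
    obtain ⟨y, hyI, hyJ, hxy⟩ := exists_insert_sdiff_singleton_indep hI hxI hx hxJx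
    obtain ⟨hyx, hyJx⟩ := (hJx.notMem_closure_iff (hI.subset_ground hyI)).1 hyJ
    have hne : y ≠ x := fun h ↦ hxI (h ▸ hyI)
    refine ⟨y, ⟨hyI, hxI, by simpa using hxy⟩, hxJ, by simpa [hne] using hyJx, by simpa using hyx⟩
  · have hxI' : M.Indep ↑(insert x I) := by
      simpa using ((hI.notMem_closure_iff hxE).1 hx).1
    obtain ⟨y, hyI, hyJ, hyJx⟩ := hJx.augment_finset hI (by
      rw [← hcard]
      exact Finset.card_erase_lt_of_mem hxJ)
    have hne : y ≠ x := fun h ↦ hxI (h ▸ hyI)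
    refine ⟨y, ⟨hyI, hxI, hxI'.subset ?_⟩, hxJ, by simpa [hne] using hyJ, by simpa using hyJx⟩
    exact Finset.coe_subset.2 (Finset.insert_subset_insert x (I.erase_subset y))

theorem IsExchange.card_insert_erase (h : IsExchange M I y x) :
    (insert x (I.erase y)).card = I.card := by
  rw [Finset.card_insert_of_notMem (fun hx ↦ h.2.1 (Finset.mem_of_mem_erase hx)),
    Finset.card_erase_add_one h.1]

theorem IsExchange.setW_insert_erase (h : IsExchange M I y x) (w : α → ℤ) :
    setW w (insert x (I.erase y)) = setW w I - w y + w x := by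
  rw [setW, Finset.sum_insert (fun hx ↦ h.2.1 (Finset.mem_of_mem_erase hx)),
    Finset.sum_erase_eq_sub h.1, add_comm, setW]

/-- `I` is locally `w`-optimal in `M`: no single exchange decreases its weight. -/
def IsExchangeOptimal (M : Matroid α) (I : Finset α) (w : α → ℤ) : Prop :=
  ∀ y x, IsExchange M I y x → w y ≤ w x

theorem isExchangeOptimal_of_forall_setW_le
    (h : ∀ J : Finset α, M.Indep ↑J → J.card = I.card → setW w I ≤ setW w J) :
    IsExchangeOptimal M I w := by
  intro y x hyx
  have := h _ hyx.2.2 hyx.card_insert_erase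
  rw [hyx.setW_insert_erase] at this
  linarith

theorem IsExchangeOptimal.setW_le (h : IsExchangeOptimal M I w) (hI : M.Indep ↑I) (hJ : M.Indep ↑J)
    (hcard : J.card = I.card) : setW w I ≤ setW w J := by
  induction hn : (J \ I).card generalizing J with
  | zero =>
    have hJI : J ⊆ I := Finset.sdiff_eq_empty_iff_subset.1 (Finset.card_eq_zero.1 hn)
    rw [Finset.eq_of_subset_of_card_le hJI hcard.ge]
  | succ n ih =>
    obtain ⟨x, hx⟩ := Finset.card_pos.1 (by omega : 0 < (J \ I).card)
    obtain ⟨hxJ, hxI⟩ := Finset.mem_sdiff.1 hx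
    obtain ⟨y, hIexch, hJexch⟩ := exists_isExchange_isExchange hI hJ hcard hxJ hxI
    have hsdiff : insert y (J.erase x) \ I = (J \ I).erase x := by
      rw [Finset.insert_sdiff_of_mem _ hIexch.1, Finset.erase_sdiff_comm]
    have hle := ih hJexch.2.2 (hJexch.card_insert_erase.trans hcard)
      (by rw [hsdiff, Finset.card_erase_of_mem hx, hn, Nat.add_sub_cancel])
    rw [hJexch.setW_insert_erase] at hle
    linarith [h y x hIexch]

theorem IsExchangeOptimal.setW_add_le (h : IsExchangeOptimal M I w) (hm : ∀ x, memX M I x → m ≤ w x)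
    (hI : M.Indep ↑I) (hJ : M.Indep ↑J) (hcard : J.card = I.card + 1) :
    setW w I + m ≤ setW w J := by
  obtain ⟨x, hxJ, hxI, hx⟩ := hI.augment_finset hJ (by omega)
  have hle : setW w I ≤ setW w (J.erase x) :=
    h.setW_le hI (hJ.subset (Finset.coe_subset.2 (J.erase_subset x)))
      (by rw [Finset.card_erase_of_mem hxJ, hcard, Nat.add_sub_cancel])
  calc setW w I + m ≤ setW w (J.erase x) + w x :=
        add_le_add hle (hm x ⟨hxI, by simpa using hx⟩)
    _ = setW w J := Finset.sum_erase_add J w hxJ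

end Exchange

section Walk

variable {α : Type*} {T : α → α → Prop} {S F : Set α} {l : List α}

/-- `l` is the vertex list of a directed walk from `S` to `F` along the relation `T`. -/
structure IsWalk (T : α → α → Prop) (S F : Set α) (l : List α) : Prop where
  ne_nil : l ≠ []
  isChain : l.IsChain T
  head_mem : l.head ne_nil ∈ S
  getLast_mem : l.getLast ne_nil ∈ F

theorem exists_isWalk_of_reflTransGen {a b : α} (h : Relation.ReflTransGen T a b) (ha : a ∈ S)
    (hb : b ∈ F) : ∃ l, IsWalk T S F l := by
  obtain ⟨l, hl, hlast⟩ := List.exists_isChain_cons_of_relationReflTransGen h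
  exact ⟨a :: l, List.cons_ne_nil a l, hl, ha, hlast ▸ hb⟩

theorem potential_getLast_le_add_sum {p c : α → ℤ} (hp : ∀ u v, T u v → p v ≤ p u + c v) {a : α}
    (hl : (a :: l).IsChain T) :
    p ((a :: l).getLast (List.cons_ne_nil a l)) ≤ p a + (l.map c).sum := by
  induction l generalizing a with
  | nil => simp
  | cons b l ih =>
    obtain ⟨hab, hbl⟩ := List.isChain_cons_cons.1 hl
    rw [List.getLast_cons_cons, List.map_cons, List.sum_cons]
    linarith [hp a b hab, ih hbl]

theorem IsWalk.reverse (h : IsWalk T S F l) : IsWalk (flip T) F S l.reverse where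
  ne_nil := by simpa using h.ne_nil
  isChain := List.isChain_reverse.2 h.isChain
  head_mem := by simpa using h.getLast_mem
  getLast_mem := by simpa using h.head_mem

/-- `l` is a walk from `S` to `F` with the fewest vertices. -/
structure IsShortestWalk (T : α → α → Prop) (S F : Set α) (l : List α) : Prop
    extends IsWalk T S F l where
  length_le : ∀ l', IsWalk T S F l' → l.length ≤ l'.length

theorem IsWalk.exists_isShortestWalk (h : IsWalk T S F l) : ∃ l', IsShortestWalk T S F l' := by
  obtain ⟨l', hl', hmin⟩ := exists_minimalFor_of_wellFoundedLT (IsWalk T S F) List.length ⟨l, h⟩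
  exact ⟨l', hl', fun l'' hl'' ↦ (le_total _ _).elim id (hmin hl'')⟩

namespace IsShortestWalk

theorem reverse (h : IsShortestWalk T S F l) : IsShortestWalk (flip T) F S l.reverse where
  toIsWalk := h.toIsWalk.reverse
  length_le l' hl' := by simpa using h.length_le l'.reverse hl'.reverse

theorem length_eq_of_getElem_mem (h : IsShortestWalk T S F l) {i : ℕ} (hi : i < l.length)
    (hF : l[i] ∈ F) : i + 1 = l.length := by
  have htake : IsWalk T S F (l.take (i + 1)) :=
    { ne_nil := by simpa using h.ne_nil
      isChain := h.isChain.take (i + 1)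
      head_mem := by simpa only [List.head_take] using h.head_mem
      getLast_mem := by simpa [List.getLast_take, hi] using hF }
  have := h.length_le _ htake
  rw [List.length_take] at this
  omega

theorem le_succ_of_rel (h : IsShortestWalk T S F l) {i j : ℕ} (hi : i < l.length)
    (hj : j < l.length) (hij : T l[i] l[j]) : j ≤ i + 1 := by
  have hshort : IsWalk T S F (l.take (i + 1) ++ l.drop j) :=
    { ne_nil := by simp [h.ne_nil]
      isChain := by
        refine (h.isChain.take (i + 1)).append (h.isChain.drop j) fun u hu v hv ↦ ?_
        simp_all [List.getLast?_take]
      head_mem := by simpa [List.head_append, List.head_take, h.ne_nil] using h.head_mem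
      getLast_mem := by
        rw [List.getLast_append_of_ne_nil _ (by simpa using hj), List.getLast_drop]
        exact h.getLast_mem }
  have := h.length_le _ hshort
  rw [List.length_append, List.length_take, List.length_drop] at this
  omega

theorem nodup (h : IsShortestWalk T S F l) : l.Nodup := by
  refine List.pairwise_iff_getElem.2 fun i j hi hj hij heq ↦ ?_
  obtain hlast | hj' : j + 1 = l.length ∨ j + 1 < l.length := by omega
  · have hF : l[i] ∈ F := by
      rw [heq]
      simpa [List.getLast_eq_getElem, ← hlast] using h.getLast_mem
    have := h.length_eq_of_getElem_mem hi hF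
    omega
  · have hT : T l[i] l[j + 1] := heq ▸ List.isChain_iff_getElem.1 h.isChain j hj'
    have := h.le_succ_of_rel hi hj' hT
    omega

end IsShortestWalk

end Walk

section Weight

variable {α : Type*} [DecidableEq α] {R : α → α → Prop} {S F : Set α} {I : Finset α}
  {w₁ w₂ : α → ℤ} {l : List α}

theorem listW_neg (W : α → ℤ) (I : Finset α) (l : List α) : listW (-W) I l = -listW W I l := by
  simp only [listW, List.sum_neg, List.map_map]
  congr 2
  funext s
  by_cases hs : s ∈ I <;> simp [exchWt, hs]

theorem setW_symmDiff (W : α → ℤ) (I : Finset α) (hl : l.Nodup) :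
    setW W (I ∆ l.toFinset) = setW W I + listW W I l := by
  have hlist : listW W I l = ∑ x ∈ l.toFinset \ I, W x - ∑ x ∈ I ∩ l.toFinset, W x := by
    calc listW W I l
      _ = ∑ x ∈ l.toFinset, if x ∈ I then -W x else W x := (List.sum_toFinset _ hl).symm
      _ = _ := by
        rw [Finset.sum_ite, Finset.sum_neg_distrib, Finset.filter_mem_eq_inter,
          Finset.filter_notMem_eq_sdiff, Finset.inter_comm]
        ring
  rw [hlist, setW, setW, Finset.symmDiff_def, Finset.sum_union disjoint_sdiff_sdiff,
    ← Finset.sum_inter_add_sum_sdiff I l.toFinset W]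
  ring

-- The function `s ↦ if s ∈ I then -w₁ s else w₂ s` is a potential: it grows by at most the vertex
-- weight of `v` along an arc `u → v`.
theorem IsWalk.add_le_listW
    (hR : ∀ u v, R u v → (u ∈ I ∧ v ∉ I ∧ w₁ u ≤ w₁ v) ∨ (u ∉ I ∧ v ∈ I ∧ w₂ v ≤ w₂ u))
    (hl : IsWalk R S F l) (hhead : l.head hl.ne_nil ∉ I) (hlast : l.getLast hl.ne_nil ∉ I) :
    w₁ (l.head hl.ne_nil) + w₂ (l.getLast hl.ne_nil) ≤ listW (w₁ + w₂) I l := by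
  let p : α → ℤ := fun s ↦ if s ∈ I then -w₁ s else w₂ s
  have hp : ∀ u v, R u v → p v ≤ p u + exchWt (w₁ + w₂) I v := by
    intro u v huv
    rcases hR u v huv with ⟨hu, hv, hle⟩ | ⟨hu, hv, hle⟩ <;>
      simp only [p, exchWt, hu, hv, if_true, if_false, Pi.add_apply] <;> linarith
  obtain ⟨a, l, rfl⟩ := List.exists_cons_of_ne_nil hl.ne_nil
  have hle := potential_getLast_le_add_sum hp hl.isChain
  simp only [List.head_cons] at hhead ⊢
  simp only [p, hhead, hlast, if_false] at hle
  simp only [listW, List.map_cons, List.sum_cons, exchWt, hhead, if_false, Pi.add_apply] at hle ⊢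
  linarith

theorem IsWalk.listW_eq
    (hR : ∀ u v, R u v → (u ∈ I ∧ v ∉ I ∧ w₁ u = w₁ v) ∨ (u ∉ I ∧ v ∈ I ∧ w₂ v = w₂ u))
    (hl : IsWalk R S F l) (hhead : l.head hl.ne_nil ∉ I) (hlast : l.getLast hl.ne_nil ∉ I) :
    listW (w₁ + w₂) I l = w₁ (l.head hl.ne_nil) + w₂ (l.getLast hl.ne_nil) := by
  refine le_antisymm ?_ (hl.add_le_listW (fun u v huv ↦ ?_) hhead hlast)
  · have := hl.add_le_listW (w₁ := -w₁) (w₂ := -w₂) (fun u v huv ↦ ?_) hhead hlast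
    · rw [← neg_add, listW_neg, Pi.neg_apply, Pi.neg_apply] at this
      linarith
    · exact (hR u v huv).imp (fun h ↦ ⟨h.1, h.2.1, (neg_inj.2 h.2.2).le⟩)
        (fun h ↦ ⟨h.1, h.2.1, (neg_inj.2 h.2.2).le⟩)
  · exact (hR u v huv).imp (fun h ↦ ⟨h.1, h.2.1, h.2.2.le⟩) (fun h ↦ ⟨h.1, h.2.1, h.2.2.le⟩)

end Weight

section Minimum

variable {α : Type*} {M₁ M₂ : Matroid α} {W : α → ℤ} {k : ℕ}

theorem exists_isMinWtOfSize (hW : BddBelow (Set.range W))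
    (hex : ∃ J : Finset α, CommonIndep M₁ M₂ J ∧ J.card = k) :
    ∃ I, IsMinWtOfSize M₁ M₂ W k I := by
  obtain ⟨c, hc⟩ := hW
  obtain ⟨J, hJ, hJcard⟩ := hex
  obtain ⟨-, ⟨I, hI, hIcard, rfl⟩, hmin⟩ := Int.exists_least_of_bdd
    (P := fun w ↦ ∃ I : Finset α, CommonIndep M₁ M₂ I ∧ I.card = k ∧ setW W I = w)
    ⟨k • c, by
      rintro - ⟨I, -, rfl, rfl⟩
      exact Finset.card_nsmul_le_sum I W c fun x _ ↦ hc ⟨x, rfl⟩⟩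
    ⟨setW W J, J, hJ, hJcard, rfl⟩
  exact ⟨I, hI, hIcard, fun K hK hKcard ↦ hmin _ ⟨K, hK, hKcard, rfl⟩⟩

end Minimum

section Splitting

variable {α : Type*} [DecidableEq α] {M₁ M₂ : Matroid α} {W : α → ℤ} {I J : Finset α}
  {w₁ w₂ : α → ℤ} {m₁ m₂ : ℤ} {l : List α} {k : ℕ}

theorem IsXPath.isWalk (h : IsXPath M₁ M₂ I l) :
    IsWalk (ExchAdj M₁ M₂ I) {x | memX M₁ I x} {x | memX M₂ I x} l := by
  obtain ⟨hne, hchain, -, hhead, hlast⟩ := h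
  exact ⟨hne, hchain, hhead, hlast⟩

theorem IsXPath.nodup (h : IsXPath M₁ M₂ I l) : l.Nodup :=
  h.choose_spec.2.1

theorem IsWalk.isXPath
    (h : IsWalk (ExchAdj M₁ M₂ I) {x | memX M₁ I x} {x | memX M₂ I x} l) (hl : l.Nodup) :
    IsXPath M₁ M₂ I l :=
  ⟨h.ne_nil, h.isChain, hl, h.head_mem, h.getLast_mem⟩

theorem IsXPath.listW_one (h : IsXPath M₁ M₂ I l) : listW 1 I l = 1 := by
  have := h.isWalk.listW_eq (w₁ := 0) (w₂ := 1) (fun u v huv ↦ ?_) h.isWalk.head_mem.1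
    h.isWalk.getLast_mem.1
  · simpa using this
  · exact huv.imp (fun h ↦ ⟨h.1, h.2.1, rfl⟩) (fun h ↦ ⟨h.1, h.2.1, rfl⟩)

theorem IsXPath.card_symmDiff (h : IsXPath M₁ M₂ I l) : (I ∆ l.toFinset).card = I.card + 1 := by
  have hW := setW_symmDiff 1 I h.nodup
  rw [h.listW_one] at hW
  simp only [setW, Pi.one_apply, Finset.sum_const, nsmul_one] at hW
  exact_mod_cast hW

/-- Frank's weight splitting `W = w₁ + w₂` at `I`: the set `I` is locally `wᵢ`-optimal in `Mᵢ`, and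
extending it in `Mᵢ` by one element costs at least `mᵢ`. It certifies that `W(I) + m₁ + m₂` is a
lower bound on the weight of the common independent sets with one more element than `I`. Bounding
the `wᵢ` from below replaces the finiteness of the ground set. -/
structure IsWeightSplitting (M₁ M₂ : Matroid α) (W : α → ℤ) (I : Finset α) (w₁ w₂ : α → ℤ)
    (m₁ m₂ : ℤ) : Prop where
  add_eq : w₁ + w₂ = W
  bddBelow₁ : BddBelow (Set.range w₁)
  bddBelow₂ : BddBelow (Set.range w₂)
  optimal₁ : IsExchangeOptimal M₁ I w₁
  optimal₂ : IsExchangeOptimal M₂ I w₂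
  le₁ : ∀ x, memX M₁ I x → m₁ ≤ w₁ x
  le₂ : ∀ x, memX M₂ I x → m₂ ≤ w₂ x

/-- `(y, x)` is an exchange pair of `M` at `I` that leaves the `w`-weight unchanged. -/
def IsTightExchange (M : Matroid α) (I : Finset α) (w : α → ℤ) (y x : α) : Prop :=
  IsExchange M I y x ∧ w y = w x

/-- The arcs of the exchange graph that are tight for a weight splitting `(w₁, w₂)`. -/
def TightAdj (M₁ M₂ : Matroid α) (I : Finset α) (w₁ w₂ : α → ℤ) (u v : α) : Prop :=
  IsTightExchange M₁ I w₁ u v ∨ IsTightExchange M₂ I w₂ v u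

/-- The elements extending `I` in `M` at `w`-weight exactly `m`. -/
def tightExtensions (M : Matroid α) (I : Finset α) (w : α → ℤ) (m : ℤ) : Set α :=
  {x | memX M I x ∧ w x = m}

theorem flip_tightAdj : flip (TightAdj M₁ M₂ I w₁ w₂) = TightAdj M₂ M₁ I w₂ w₁ := by
  funext u v
  exact propext or_comm

theorem TightAdj.exchAdj {u v : α} (h : TightAdj M₁ M₂ I w₁ w₂ u v) : ExchAdj M₁ M₂ I u v :=
  exchAdj_iff.2 (h.imp And.left And.left)

theorem IsWalk.isWalk_exchAdj (h : IsWalk (TightAdj M₁ M₂ I w₁ w₂) (tightExtensions M₁ I w₁ m₁)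
    (tightExtensions M₂ I w₂ m₂) l) :
    IsWalk (ExchAdj M₁ M₂ I) {x | memX M₁ I x} {x | memX M₂ I x} l :=
  ⟨h.ne_nil, h.isChain.imp fun _ _ ↦ TightAdj.exchAdj, h.head_mem.1, h.getLast_mem.1⟩

theorem IsWalk.listW_eq_of_tightAdj (h : IsWalk (TightAdj M₁ M₂ I w₁ w₂)
    (tightExtensions M₁ I w₁ m₁) (tightExtensions M₂ I w₂ m₂) l) :
    listW (w₁ + w₂) I l = m₁ + m₂ := by
  have hR : ∀ u v, TightAdj M₁ M₂ I w₁ w₂ u v →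
      (u ∈ I ∧ v ∉ I ∧ w₁ u = w₁ v) ∨ (u ∉ I ∧ v ∈ I ∧ w₂ v = w₂ u) := fun u v huv ↦
    huv.imp (fun h ↦ ⟨h.1.1, h.1.2.1, h.2⟩) (fun h ↦ ⟨h.1.2.1, h.1.1, h.2⟩)
  rw [h.listW_eq hR h.head_mem.1.1 h.getLast_mem.1.1, h.head_mem.2, h.getLast_mem.2]

namespace IsWeightSplitting

theorem symm (h : IsWeightSplitting M₁ M₂ W I w₁ w₂ m₁ m₂) :
    IsWeightSplitting M₂ M₁ W I w₂ w₁ m₂ m₁ :=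
  ⟨add_comm w₁ w₂ ▸ h.add_eq, h.bddBelow₂, h.bddBelow₁, h.optimal₂, h.optimal₁, h.le₂, h.le₁⟩

theorem setW_eq (h : IsWeightSplitting M₁ M₂ W I w₁ w₂ m₁ m₂) (J : Finset α) :
    setW W J = setW w₁ J + setW w₂ J := by
  rw [← h.add_eq]
  exact Finset.sum_add_distrib

theorem setW_add_le (h : IsWeightSplitting M₁ M₂ W I w₁ w₂ m₁ m₂) (hI : CommonIndep M₁ M₂ I)
    (hJ : CommonIndep M₁ M₂ J) (hcard : J.card = I.card + 1) :
    setW W I + (m₁ + m₂) ≤ setW W J := by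
  have h₁ := h.optimal₁.setW_add_le h.le₁ hI.1 hJ.1 hcard
  have h₂ := h.optimal₂.setW_add_le h.le₂ hI.2 hJ.2 hcard
  rw [h.setW_eq, h.setW_eq]
  linarith

theorem le_listW (h : IsWeightSplitting M₁ M₂ W I w₁ w₂ m₁ m₂) (hl : IsXPath M₁ M₂ I l) :
    m₁ + m₂ ≤ listW W I l := by
  have hwalk := hl.isWalk
  refine (add_le_add (h.le₁ _ hwalk.head_mem) (h.le₂ _ hwalk.getLast_mem)).trans ?_
  rw [← h.add_eq]
  refine hwalk.add_le_listW (fun u v huv ↦ ?_) hwalk.head_mem.1 hwalk.getLast_mem.1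
  exact (exchAdj_iff.1 huv).imp (fun h₁ ↦ ⟨h₁.1, h₁.2.1, h.optimal₁ u v h₁⟩)
    (fun h₂ ↦ ⟨h₂.2.1, h₂.1, h.optimal₂ v u h₂⟩)

theorem shift (h : IsWeightSplitting M₁ M₂ W I w₁ w₂ m₁ m₂) {R : Set α}
    (hR : ∀ u v, TightAdj M₁ M₂ I w₁ w₂ u v → u ∈ R → v ∈ R)
    (hS : tightExtensions M₁ I w₁ m₁ ⊆ R) (hF : Disjoint (tightExtensions M₂ I w₂ m₂) R) :
    IsWeightSplitting M₁ M₂ W I (w₁ - Rᶜ.indicator 1) (w₂ + Rᶜ.indicator 1) m₁ (m₂ + 1) where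
  add_eq := by rw [← h.add_eq]; abel
  bddBelow₁ := by
    obtain ⟨c, hc⟩ := h.bddBelow₁
    exact ⟨c - 1, Set.forall_mem_range.2 fun x ↦
      sub_le_sub (hc ⟨x, rfl⟩) (Set.indicator_le_self' (fun _ _ ↦ zero_le_one) x)⟩
  bddBelow₂ := by
    obtain ⟨c, hc⟩ := h.bddBelow₂
    exact ⟨c, Set.forall_mem_range.2 fun x ↦
      le_add_of_le_of_nonneg (hc ⟨x, rfl⟩) (Set.indicator_nonneg (fun _ _ ↦ zero_le_one) x)⟩
  optimal₁ y x hyx := by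
    have hle := h.optimal₁ y x hyx
    have hmem : w₁ y = w₁ x → y ∈ R → x ∈ R := fun heq ↦ hR y x (Or.inl ⟨hyx, heq⟩)
    classical
    simp only [Pi.sub_apply, Set.indicator_apply, Set.mem_compl_iff, Pi.one_apply]
    grind
  optimal₂ y x hyx := by
    have hle := h.optimal₂ y x hyx
    have hmem : w₂ y = w₂ x → x ∈ R → y ∈ R := fun heq ↦ hR x y (Or.inr ⟨hyx, heq⟩)
    classical
    simp only [Pi.add_apply, Set.indicator_apply, Set.mem_compl_iff, Pi.one_apply]
    grind
  le₁ x hx := by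
    have hle := h.le₁ x hx
    have hmem : w₁ x = m₁ → x ∈ R := fun heq ↦ hS ⟨hx, heq⟩
    classical
    simp only [Pi.sub_apply, Set.indicator_apply, Set.mem_compl_iff, Pi.one_apply]
    grind
  le₂ x hx := by
    have hle := h.le₂ x hx
    have hmem : w₂ x = m₂ → x ∉ R := fun heq ↦ Set.disjoint_left.1 hF ⟨hx, heq⟩
    classical
    simp only [Pi.add_apply, Set.indicator_apply, Set.mem_compl_iff, Pi.one_apply]
    grind

-- Take `A = I` at the end of the walk and `A = I \ {l[i + 1]}` before it. A smaller `w₂ l[j]` would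
-- contradict local optimality, and an equal one with `j < i` would shorten the walk.
theorem exists_forall_insert_indep_lt (h : IsWeightSplitting M₁ M₂ W I w₁ w₂ m₁ m₂)
    (hl : IsShortestWalk (TightAdj M₁ M₂ I w₁ w₂) (tightExtensions M₁ I w₁ m₁)
      (tightExtensions M₂ I w₂ m₂) l) {i : ℕ} (hi : i < l.length) (hiI : l[i] ∉ I) :
    ∃ A : Finset α, I \ l.toFinset ⊆ A ∧ l[i] ∉ A ∧ M₂.Indep ↑(insert l[i] A) ∧
      ∀ (j : ℕ) (hj : j < l.length), l[j] ∉ I → j ≠ i → M₂.Indep ↑(insert l[j] A) →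
        toLex (w₂ l[i], i) < toLex (w₂ l[j], j) := by
  obtain hlast | hi' : i + 1 = l.length ∨ i + 1 < l.length := by omega
  · have hmem : l[i] ∈ tightExtensions M₂ I w₂ m₂ := by
      simpa [List.getLast_eq_getElem, ← hlast] using hl.getLast_mem
    refine ⟨I, Finset.sdiff_subset, hiI, hmem.1.2, fun j hj hjI hji hindep ↦ ?_⟩
    have hle : w₂ l[i] ≤ w₂ l[j] := hmem.2.trans_le (h.le₂ _ ⟨hjI, hindep⟩)
    refine Prod.Lex.toLex_lt_toLex.2 (Or.inl (hle.lt_of_ne fun heq ↦ hji ?_))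
    have := hl.length_eq_of_getElem_mem hj ⟨⟨hjI, hindep⟩, heq.symm.trans hmem.2⟩
    omega
  · obtain hadj | ⟨hexch, htight⟩ := List.isChain_iff_getElem.1 hl.isChain i hi'
    · exact absurd hadj.1.1 hiI
    have hsub : I \ l.toFinset ⊆ I.erase l[i + 1] :=
      Finset.subset_erase.2 ⟨Finset.sdiff_subset, by simp⟩
    refine ⟨I.erase l[i + 1], hsub, fun hmem ↦ hiI (Finset.mem_of_mem_erase hmem), hexch.2.2,
      fun j hj hjI hji hindep ↦ ?_⟩
    have hexch' : IsExchange M₂ I l[i + 1] l[j] := ⟨hexch.1, hjI, hindep⟩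
    have hle := h.optimal₂ _ _ hexch'
    refine Prod.Lex.toLex_lt_toLex.2 (hle.lt_or_eq.imp (htight ▸ ·) fun heq ↦ ?_)
    have := hl.le_succ_of_rel hj hi' (Or.inr ⟨hexch', heq⟩)
    exact ⟨htight.symm.trans heq, by omega⟩

theorem indep_symmDiff₂ (h : IsWeightSplitting M₁ M₂ W I w₁ w₂ m₁ m₂) (hI : M₂.Indep ↑I)
    (hl : IsShortestWalk (TightAdj M₁ M₂ I w₁ w₂) (tightExtensions M₁ I w₁ m₁)
      (tightExtensions M₂ I w₂ m₂) l) : M₂.Indep ↑(I ∆ l.toFinset) := by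
  have hB : M₂.Indep ↑(I \ l.toFinset) := hI.subset (Finset.coe_subset.2 Finset.sdiff_subset)
  rw [Finset.symmDiff_def, Finset.coe_union]
  refine indep_union_of_forall_insert_indep hB _ (fun x ↦ toLex (w₂ x, l.idxOf x)) fun x hx ↦ ?_
  obtain ⟨hxl, hxI⟩ := Finset.mem_sdiff.1 hx
  obtain ⟨i, hi, rfl⟩ := List.getElem_of_mem (List.mem_toFinset.1 hxl)
  obtain ⟨A, hA, hiA, hindep, hlt⟩ := h.exists_forall_insert_indep_lt hl hi hxI
  refine ⟨A, Finset.coe_subset.2 hA, hiA, by simpa using hindep, fun x' hx' hne hindep' ↦ ?_⟩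
  obtain ⟨hxl', hxI'⟩ := Finset.mem_sdiff.1 hx'
  obtain ⟨j, hj, rfl⟩ := List.getElem_of_mem (List.mem_toFinset.1 hxl')
  rw [hl.nodup.idxOf_getElem, hl.nodup.idxOf_getElem]
  exact hlt j hj hxI' (fun hji ↦ hne (by simp only [hji])) (by simpa using hindep')

theorem commonIndep_symmDiff (h : IsWeightSplitting M₁ M₂ W I w₁ w₂ m₁ m₂)
    (hI : CommonIndep M₁ M₂ I) (hl : IsShortestWalk (TightAdj M₁ M₂ I w₁ w₂)
      (tightExtensions M₁ I w₁ m₁) (tightExtensions M₂ I w₂ m₂) l) :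
    CommonIndep M₁ M₂ (I ∆ l.toFinset) := by
  have hrev := hl.reverse
  rw [flip_tightAdj] at hrev
  have h₁ := h.symm.indep_symmDiff₂ hI.1 hrev
  rw [List.toFinset_reverse] at h₁
  exact ⟨h₁, h.indep_symmDiff₂ hI.2 hl⟩

end IsWeightSplitting

/-- A weight splitting whose lower bound `m₁ + m₂` is the largest possible. -/
structure IsOptimalSplitting (M₁ M₂ : Matroid α) (W : α → ℤ) (I : Finset α) (w₁ w₂ : α → ℤ)
    (m₁ m₂ : ℤ) : Prop extends IsWeightSplitting M₁ M₂ W I w₁ w₂ m₁ m₂ where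
  maximal : ∀ {u₁ u₂ n₁ n₂}, IsWeightSplitting M₁ M₂ W I u₁ u₂ n₁ n₂ → n₁ + n₂ ≤ m₁ + m₂

theorem IsWeightSplitting.exists_isOptimalSplitting
    (h : IsWeightSplitting M₁ M₂ W I w₁ w₂ m₁ m₂) (hI : CommonIndep M₁ M₂ I)
    (hJ : CommonIndep M₁ M₂ J) (hcard : J.card = I.card + 1) :
    ∃ u₁ u₂ n₁ n₂, IsOptimalSplitting M₁ M₂ W I u₁ u₂ n₁ n₂ := by
  obtain ⟨-, ⟨u₁, u₂, n₁, n₂, hu, rfl⟩, hmax⟩ := Int.exists_greatest_of_bdd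
    (P := fun L ↦ ∃ u₁ u₂ n₁ n₂, IsWeightSplitting M₁ M₂ W I u₁ u₂ n₁ n₂ ∧ n₁ + n₂ = L)
    ⟨setW W J - setW W I, by
      rintro - ⟨u₁, u₂, n₁, n₂, hu, rfl⟩
      linarith [hu.setW_add_le hI hJ hcard]⟩
    ⟨m₁ + m₂, w₁, w₂, m₁, m₂, h, rfl⟩
  exact ⟨u₁, u₂, n₁, n₂, hu, fun ht ↦ hmax _ ⟨_, _, _, _, ht, rfl⟩⟩

namespace IsOptimalSplitting

theorem exists_isWalk_tightAdj (h : IsOptimalSplitting M₁ M₂ W I w₁ w₂ m₁ m₂) :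
    ∃ l, IsWalk (TightAdj M₁ M₂ I w₁ w₂) (tightExtensions M₁ I w₁ m₁)
      (tightExtensions M₂ I w₂ m₂) l := by
  let R : Set α := {v | ∃ a ∈ tightExtensions M₁ I w₁ m₁,
    Relation.ReflTransGen (TightAdj M₁ M₂ I w₁ w₂) a v}
  by_contra hno
  have hR : ∀ u v, TightAdj M₁ M₂ I w₁ w₂ u v → u ∈ R → v ∈ R :=
    fun u v huv ⟨a, ha, hau⟩ ↦ ⟨a, ha, hau.tail huv⟩
  have hF : Disjoint (tightExtensions M₂ I w₂ m₂) R :=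
    Set.disjoint_left.2 fun b hb ⟨a, ha, hab⟩ ↦ hno (exists_isWalk_of_reflTransGen hab ha hb)
  have := h.maximal (h.shift hR (fun a ha ↦ ⟨a, ha, .refl⟩) hF)
  omega

theorem exists_isXPath (h : IsOptimalSplitting M₁ M₂ W I w₁ w₂ m₁ m₂)
    (hI : CommonIndep M₁ M₂ I) : ∃ l, IsXPath M₁ M₂ I l ∧ listW W I l = m₁ + m₂ ∧
      CommonIndep M₁ M₂ (I ∆ l.toFinset) := by
  obtain ⟨_, hwalk⟩ := h.exists_isWalk_tightAdj
  obtain ⟨l, hl⟩ := hwalk.exists_isShortestWalk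
  exact ⟨l, hl.isWalk_exchAdj.isXPath hl.nodup, h.add_eq ▸ hl.listW_eq_of_tightAdj,
    h.commonIndep_symmDiff hI hl⟩

theorem isLeast_listW (h : IsOptimalSplitting M₁ M₂ W I w₁ w₂ m₁ m₂)
    (hI : CommonIndep M₁ M₂ I) :
    IsLeast {w : ℤ | ∃ l : List α, IsXPath M₁ M₂ I l ∧ listW W I l = w} (m₁ + m₂) := by
  obtain ⟨l, hl, hlW, -⟩ := h.exists_isXPath hI
  refine ⟨⟨l, hl, hlW⟩, ?_⟩
  rintro - ⟨l', hl', rfl⟩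
  exact h.le_listW hl'

theorem isLeast_setW (h : IsOptimalSplitting M₁ M₂ W I w₁ w₂ m₁ m₂)
    (hI : CommonIndep M₁ M₂ I) :
    IsLeast {w : ℤ | ∃ J : Finset α, CommonIndep M₁ M₂ J ∧ J.card = I.card + 1 ∧ setW W J = w}
      (setW W I + (m₁ + m₂)) := by
  obtain ⟨l, hl, hlW, hindep⟩ := h.exists_isXPath hI
  refine ⟨⟨I ∆ l.toFinset, hindep, hl.card_symmDiff, ?_⟩, ?_⟩
  · rw [setW_symmDiff W I hl.nodup, hlW]
  · rintro - ⟨J, hJ, hcard, rfl⟩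
    exact h.setW_add_le hI hJ hcard

-- A minimum-weight `J` attains the lower bounds of both `Mᵢ` at once, so it is `wᵢ`-minimal in `Mᵢ`
-- among the independent sets of its size.
theorem exists_isWeightSplitting_succ (h : IsOptimalSplitting M₁ M₂ W I w₁ w₂ m₁ m₂)
    (hI : CommonIndep M₁ M₂ I) (hJ : IsMinWtOfSize M₁ M₂ W (I.card + 1) J) :
    ∃ n₁ n₂, IsWeightSplitting M₁ M₂ W J w₁ w₂ n₁ n₂ := by
  obtain ⟨hJindep, hJcard, hJmin⟩ := hJ
  obtain ⟨K, hK, hKcard, hKW⟩ := (h.isLeast_setW hI).1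
  have hW : setW W J ≤ setW W I + (m₁ + m₂) := hKW ▸ hJmin K hK hKcard
  rw [h.setW_eq I, h.setW_eq J] at hW
  have hJ₁ := h.optimal₁.setW_add_le h.le₁ hI.1 hJindep.1 hJcard
  have hJ₂ := h.optimal₂.setW_add_le h.le₂ hI.2 hJindep.2 hJcard
  obtain ⟨n₁, hn₁⟩ := h.bddBelow₁
  obtain ⟨n₂, hn₂⟩ := h.bddBelow₂
  refine ⟨n₁, n₂, h.add_eq, h.bddBelow₁, h.bddBelow₂,
    isExchangeOptimal_of_forall_setW_le fun K hK hKcard ↦ ?_,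
    isExchangeOptimal_of_forall_setW_le fun K hK hKcard ↦ ?_,
    fun x _ ↦ hn₁ ⟨x, rfl⟩, fun x _ ↦ hn₂ ⟨x, rfl⟩⟩
  · linarith [h.optimal₁.setW_add_le h.le₁ hI.1 hK (hKcard.trans hJcard)]
  · linarith [h.optimal₂.setW_add_le h.le₂ hI.2 hK (hKcard.trans hJcard)]

end IsOptimalSplitting

theorem IsMinWtOfSize.exists_isWeightSplitting (hW : BddBelow (Set.range W))
    (hI : IsMinWtOfSize M₁ M₂ W k I) :
    ∃ w₁ w₂ m₁ m₂, IsWeightSplitting M₁ M₂ W I w₁ w₂ m₁ m₂ := by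
  induction k generalizing I with
  | zero =>
    obtain rfl : I = ∅ := Finset.card_eq_zero.1 hI.2.1
    obtain ⟨c, hc⟩ := hW
    have hopt : ∀ (M : Matroid α) w, IsExchangeOptimal M ∅ w :=
      fun _ _ y _ hyx ↦ absurd hyx.1 (Finset.notMem_empty y)
    exact ⟨W, 0, c, 0, add_zero W, ⟨c, hc⟩, ⟨0, Set.forall_mem_range.2 fun _ ↦ le_rfl⟩,
      hopt M₁ W, hopt M₂ 0, fun x _ ↦ hc ⟨x, rfl⟩, fun _ _ ↦ le_rfl⟩
  | succ k ih =>
    obtain ⟨H₀, hH₀I, hH₀card⟩ :=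
      Finset.exists_subset_card_eq (k.le_succ.trans hI.2.1.ge)
    obtain ⟨H, hH⟩ : ∃ H, IsMinWtOfSize M₁ M₂ W k H :=
      exists_isMinWtOfSize hW ⟨H₀, ⟨hI.1.1.subset (Finset.coe_subset.2 hH₀I),
        hI.1.2.subset (Finset.coe_subset.2 hH₀I)⟩, hH₀card⟩
    obtain ⟨w₁, w₂, m₁, m₂, hw⟩ := ih hH
    obtain ⟨hHindep, rfl, -⟩ := hH
    obtain ⟨u₁, u₂, n₁, n₂, hu⟩ := hw.exists_isOptimalSplitting hHindep hI.1 hI.2.1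
    exact ⟨u₁, u₂, hu.exists_isWeightSplitting_succ hHindep hI⟩

end Splitting

theorem min_kplus1_eq_weight_add_minPath_general {α : Type*} [DecidableEq α]
    (M₁ M₂ : Matroid α) (W : α → ℤ) (hW : BddBelow (Set.range W)) (k : ℕ) (Ik : Finset α)
    (hIk : IsMinWtOfSize M₁ M₂ W k Ik)
    (hex : ∃ J : Finset α, CommonIndep M₁ M₂ J ∧ J.card = k + 1) :
    ∃ L : ℤ,
      IsLeast {w : ℤ | ∃ l : List α, IsXPath M₁ M₂ Ik l ∧ listW W Ik l = w} L ∧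
      IsLeast {w : ℤ | ∃ J : Finset α, CommonIndep M₁ M₂ J ∧ J.card = k + 1 ∧ setW W J = w}
        (setW W Ik + L) := by
  obtain ⟨w₁, w₂, m₁, m₂, hw⟩ := hIk.exists_isWeightSplitting hW
  obtain ⟨hI, rfl, -⟩ := hIk
  obtain ⟨J, hJ, hcard⟩ := hex
  obtain ⟨u₁, u₂, n₁, n₂, hu⟩ := hw.exists_isOptimalSplitting hI hJ hcard
  exact ⟨n₁ + n₂, hu.isLeast_listW hI, hu.isLeast_setW hI⟩

/-- If `I_k` is a minimum-weight size-`k` common independent set and some size-`(k+1)`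
common independent set exists, then `min_{k+1}(M₁,M₂) = W(I_k) + L`, where `L` is the
minimum weight of a directed `X₁`–`X₂` path in the exchange graph `𝓔(M₁,M₂,I_k)`. -/
theorem min_kplus1_eq_weight_add_minPath {α : Type*} [Fintype α] [DecidableEq α]
    (M₁ M₂ : Matroid α) (hE₁ : M₁.E = Set.univ) (hE₂ : M₂.E = Set.univ)
    (W : α → ℤ) (k : ℕ) (Ik : Finset α) (hIk : IsMinWtOfSize M₁ M₂ W k Ik)
    (hex : ∃ J : Finset α, CommonIndep M₁ M₂ J ∧ J.card = k + 1) :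
    ∃ L : ℤ,
      IsLeast {w : ℤ | ∃ l : List α, IsXPath M₁ M₂ Ik l ∧ listW W Ik l = w} L ∧
      IsLeast {w : ℤ | ∃ J : Finset α, CommonIndep M₁ M₂ J ∧ J.card = k + 1 ∧ setW W J = w}
        (setW W Ik + L) :=
  min_kplus1_eq_weight_add_minPath_general M₁ M₂ W (Set.finite_range W).bddBelow k Ik hIk hex
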